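/- (Theorem 3: false-negative exponent of the Neyman–Pearson game at equilibrium.) Let A be a nonempty finite set, d : A × A → ℝ nonnegative with d(a,a) = 0 for all a (extended additively to sequences), let P_0, P_1 be strictly positive PMFs on A, Δ_0, Δ_1 ≥ 0 and λ > 0. For each n let Φ*_n(y) = exp( −n · max{ λ − min_{x ∈ A^n : d(x,y) ≤ nΔ_0} D(P̂_x ‖ P_0), 0 } ) and let A*_{Δ_1} be the channel defined below. Then P_FN(Φ*_n, A*_{Δ_1}) > 0 for all sufficiently large n, and the sequence n ↦ −(1/n)·ln P_FN(Φ*_n, A*_{Δ_1}) converges, as n → ∞, to min over PMFs P_Y on A with D̃_{Δ_0}(P_Y, P_0) ≤ λ of D̃_{Δ_1}(P_Y, P_1). -/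

import Mathlib

open scoped Classical
open Finset Filter

noncomputable section

/-- A probability mass function on a finite alphabet, as a real-valued function. -/
def IsPMF {A : Type} [Fintype A] (P : A → ℝ) : Prop :=
  (∀ a, 0 ≤ P a) ∧ ∑ a, P a = 1

/-- Kullback--Leibler divergence `D(Q‖P) = ∑_{a : Q a > 0} Q a · ln (Q a / P a)`. -/
def klDiv {A : Type} [Fintype A] (Q P : A → ℝ) : ℝ :=
  ∑ a, if 0 < Q a then Q a * Real.log (Q a / P a) else 0

/-- First marginal of a joint PMF on `A × A`. -/
def margX {A : Type} [Fintype A] (Q : A × A → ℝ) : A → ℝ := fun a => ∑ b, Q (a, b)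

/-- Second marginal of a joint PMF on `A × A`. -/
def margY {A : Type} [Fintype A] (Q : A × A → ℝ) : A → ℝ := fun b => ∑ a, Q (a, b)

/-- Expected distortion of a joint PMF. -/
def expDist {A : Type} [Fintype A] (d : A → A → ℝ) (Q : A × A → ℝ) : ℝ :=
  ∑ q : A × A, Q q * d q.1 q.2

/-- Generalized divergence `D̃_Δ(P_Y, P)`: minimum of `D(Q_X‖P)` over joint PMFs `Q`
with second marginal `P_Y` and expected distortion at most `Δ`. -/
def Dtilde {A : Type} [Fintype A] (d : A → A → ℝ) (Δ : ℝ) (PY P : A → ℝ) : ℝ :=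
  sInf {v | ∃ Q : A × A → ℝ,
    IsPMF Q ∧ margY Q = PY ∧ expDist d Q ≤ Δ ∧ v = klDiv (margX Q) P}

/-- Earth mover distance between two PMFs. -/
def EMD {A : Type} [Fintype A] (d : A → A → ℝ) (P P' : A → ℝ) : ℝ :=
  sInf {v | ∃ R : A × A → ℝ,
    IsPMF R ∧ margX R = P ∧ margY R = P' ∧ v = expDist d R}

/-- Memoryless (product) probability of a sequence. -/
def seqProb {A : Type} {n : ℕ} (P : A → ℝ) (x : Fin n → A) : ℝ := ∏ i, P (x i)

/-- Additive extension of a per-letter distortion to sequences. -/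
def dSeq {A : Type} {n : ℕ} (d : A → A → ℝ) (x y : Fin n → A) : ℝ := ∑ i, d (x i) (y i)

/-- Empirical PMF (type) of a sequence. -/
def empP {A : Type} [Fintype A] [DecidableEq A] {n : ℕ} (x : Fin n → A) : A → ℝ :=
  fun a => ((univ.filter fun i => x i = a).card : ℝ) / (n : ℝ)

/-- Empirical entropy of a sequence. -/
def empEnt {A : Type} [Fintype A] [DecidableEq A] {n : ℕ} (y : Fin n → A) : ℝ :=
  -∑ a, if 0 < empP y a then empP y a * Real.log (empP y a) else 0

/-- Conditional type class `T(y|x)`. -/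
def condTypeClass {A : Type} [Fintype A] [DecidableEq A] {n : ℕ} (x y : Fin n → A) :
    Finset (Fin n → A) :=
  univ.filter fun y' => ∀ a b : A,
    (univ.filter fun i => x i = a ∧ y' i = b).card
      = (univ.filter fun i => x i = a ∧ y i = b).card

/-- Number of distinct conditional type classes `T(y|x)` arising from `y` with
`dn x y ≤ n·Δ`. -/
def numCondTypes {A : Type} [Fintype A] [DecidableEq A] {n : ℕ}
    (dn : (Fin n → A) → (Fin n → A) → ℝ) (Δ : ℝ) (x : Fin n → A) : ℕ :=
  ((univ.filter fun y => dn x y ≤ (n : ℝ) * Δ).image fun y => condTypeClass x y).card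

/-- The optimal attack channel `A*_Δ(y|x) = c_n(x)/|T(y|x)|` on admissible `y`,
and `0` otherwise; here `c_n(x)` is the reciprocal of the number of admissible
conditional type classes. -/
def Astar {A : Type} [Fintype A] [DecidableEq A] {n : ℕ}
    (dn : (Fin n → A) → (Fin n → A) → ℝ) (Δ : ℝ) (x y : Fin n → A) : ℝ :=
  if dn x y ≤ (n : ℝ) * Δ then
    ((numCondTypes dn Δ x : ℝ))⁻¹ / ((condTypeClass x y).card : ℝ)
  else 0

/-- A channel on `A^n`: `W x y` is the conditional probability of output `y` given input `x`. -/
def IsChannel {A : Type} [Fintype A] {n : ℕ}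
    (W : (Fin n → A) → (Fin n → A) → ℝ) : Prop :=
  (∀ x y, 0 ≤ W x y) ∧ ∀ x, ∑ y, W x y = 1

/-- The class `C_Δ` of admissible channels: those assigning zero probability to any
`y` with `dn x y > n·Δ`. -/
def InC {A : Type} [Fintype A] {n : ℕ}
    (dn : (Fin n → A) → (Fin n → A) → ℝ) (Δ : ℝ)
    (W : (Fin n → A) → (Fin n → A) → ℝ) : Prop :=
  IsChannel W ∧ ∀ x y, (n : ℝ) * Δ < dn x y → W x y = 0

/-- False positive probability: `Φ y` is the probability of deciding `H₁` given `y`. -/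
def PFP {A : Type} [Fintype A] {n : ℕ} (P0 : A → ℝ) (Φ : (Fin n → A) → ℝ)
    (A0 : (Fin n → A) → (Fin n → A) → ℝ) : ℝ :=
  ∑ x, ∑ y, seqProb P0 x * A0 x y * Φ y

/-- False negative probability. -/
def PFN {A : Type} [Fintype A] {n : ℕ} (P1 : A → ℝ) (Φ : (Fin n → A) → ℝ)
    (A1 : (Fin n → A) → (Fin n → A) → ℝ) : ℝ :=
  ∑ x, ∑ y, seqProb P1 x * A1 x y * (1 - Φ y)

/-- Sequence-level generalized divergence
`D̃ⁿ_Δ(y,P) = min_{x : d(x,y) ≤ nΔ} D(P̂_x‖P)`. -/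
def DtildeN {A : Type} [Fintype A] [DecidableEq A] {n : ℕ} (d : A → A → ℝ) (Δ : ℝ)
    (y : Fin n → A) (P : A → ℝ) : ℝ :=
  sInf {v | ∃ x : Fin n → A, dSeq d x y ≤ (n : ℝ) * Δ ∧ v = klDiv (empP x) P}

/-! The method of types. There are only polynomially many types, and an i.i.d. `P`-source emits a
sequence of type `Q` with probability `exp (-n D(Q‖P))` up to a polynomial factor.

Upper bound: an attack can turn `x` into a `y` which the rule does not assign to `H₁` with certainty
only if the type `P_Y` of `y` satisfies `D̃_{Δ₀}(P_Y, P₀) ≤ λ`, and then `D(P̂_x‖P₁)` is at least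
`D̃_{Δ₁}(P_Y, P₁)`, hence at least the claimed exponent.

Lower bound: one type class suffices. Near-optimal couplings for `(Δ₀, P₀)` and `(Δ₁, P₁)` with the
same second marginal are rounded to joint types with a common second marginal. The second one
gives a type class of sequences `x` and a conditional type class of attacks on each; the first one
shows that the rule errs with probability at least `1/2` on their outputs. -/

section KullbackLeibler

variable {A : Type} [Fintype A] {P Q : A → ℝ}

lemma klDiv_eq_sum (hP : ∀ a, 0 < P a) (hQ : 0 ≤ Q) :
    klDiv Q P = ∑ a, (Q a * Real.log (Q a) - Q a * Real.log (P a)) := by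
  refine Finset.sum_congr rfl fun a _ => ?_
  split_ifs with h
  · rw [Real.log_div h.ne' (hP a).ne', mul_sub]
  · have hQa : Q a = 0 := le_antisymm (not_lt.mp h) (hQ a)
    simp [hQa]

lemma klDiv_self (hP : ∀ a, 0 < P a) : klDiv P P = 0 := by
  simp [klDiv_eq_sum hP fun a => (hP a).le]

lemma sum_sub_sum_le_klDiv (hP : ∀ a, 0 < P a) : ∑ a, Q a - ∑ a, P a ≤ klDiv Q P := by
  rw [← Finset.sum_sub_distrib]
  refine Finset.sum_le_sum fun a _ => ?_
  split_ifs with h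
  · calc Q a - P a = Q a * (1 - (Q a / P a)⁻¹) := by field_simp
      _ ≤ Q a * Real.log (Q a / P a) :=
        mul_le_mul_of_nonneg_left (Real.one_sub_inv_le_log_of_pos (div_pos h (hP a))) h.le
  · linarith [not_lt.mp h, hP a]

lemma convexOn_klDiv (hP : ∀ a, 0 < P a) : ConvexOn ℝ (Set.Ici 0) (klDiv · P) := by
  refine ⟨convex_Ici 0, fun Q hQ R hR s t hs ht hst => ?_⟩
  have hmix : 0 ≤ s • Q + t • R := add_nonneg (smul_nonneg hs hQ) (smul_nonneg ht hR)
  simp only [klDiv_eq_sum hP hQ, klDiv_eq_sum hP hR, klDiv_eq_sum hP hmix, smul_eq_mul,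
    Finset.mul_sum, ← Finset.sum_add_distrib]
  refine Finset.sum_le_sum fun a _ => ?_
  have hconv := Real.convexOn_mul_log.2 (hQ a) (hR a) hs ht hst
  simp only [Pi.add_apply, Pi.smul_apply, smul_eq_mul] at hconv ⊢
  linarith

lemma continuousOn_klDiv (hP : ∀ a, 0 < P a) : ContinuousOn (klDiv · P) (Set.Ici 0) := by
  have hcont : Continuous fun Q : A → ℝ => ∑ a, (Q a * Real.log (Q a) - Q a * Real.log (P a)) :=
    continuous_finsetSum _ fun a _ =>
      (Real.continuous_mul_log.comp (continuous_apply a)).sub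
        ((continuous_apply a).mul continuous_const)
  exact hcont.continuousOn.congr fun Q hQ => klDiv_eq_sum hP hQ

end KullbackLeibler

section Couplings

variable {A : Type} [Fintype A] {d : A → A → ℝ} {Δ : ℝ} {P PY PY' : A → ℝ} {Q Q' : A × A → ℝ}

lemma margX_smul_add_smul (s t : ℝ) (Q Q' : A × A → ℝ) :
    margX (s • Q + t • Q') = s • margX Q + t • margX Q' := by
  ext a
  simp [margX, Finset.sum_add_distrib, Finset.mul_sum]

lemma margY_smul_add_smul (s t : ℝ) (Q Q' : A × A → ℝ) :
    margY (s • Q + t • Q') = s • margY Q + t • margY Q' := by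
  ext b
  simp [margY, Finset.sum_add_distrib, Finset.mul_sum]

lemma expDist_smul_add_smul (d : A → A → ℝ) (s t : ℝ) (Q Q' : A × A → ℝ) :
    expDist d (s • Q + t • Q') = s * expDist d Q + t * expDist d Q' := by
  simp [expDist, Finset.mul_sum, ← Finset.sum_add_distrib, add_mul, mul_assoc]

lemma expDist_eq_sum_sum (d : A → A → ℝ) (Q : A × A → ℝ) :
    expDist d Q = ∑ b, ∑ a, Q (a, b) * d a b :=
  Fintype.sum_prod_type_right _

lemma IsPMF.smul_add_smul {B : Type} [Fintype B] {P P' : B → ℝ} (hP : IsPMF P) (hP' : IsPMF P')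
    {s t : ℝ} (hs : 0 ≤ s) (ht : 0 ≤ t) (hst : s + t = 1) : IsPMF (s • P + t • P') :=
  convex_stdSimplex ℝ B hP hP' hs ht hst

lemma IsPMF.margX (hQ : IsPMF Q) : IsPMF (margX Q) :=
  ⟨fun _ => Finset.sum_nonneg fun _ _ => hQ.1 _, (Fintype.sum_prod_type _).symm.trans hQ.2⟩

lemma IsPMF.margY (hQ : IsPMF Q) : IsPMF (margY Q) :=
  ⟨fun _ => Finset.sum_nonneg fun _ _ => hQ.1 _, (Fintype.sum_prod_type_right _).symm.trans hQ.2⟩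

/-- The joint PMF of `(X, X)` for `X ∼ P`: the coupling of an attacker who changes nothing. -/
def diagCoupling (P : A → ℝ) (q : A × A) : ℝ := if q.1 = q.2 then P q.1 else 0

lemma margX_diagCoupling (P : A → ℝ) : margX (diagCoupling P) = P := by
  ext a
  simp [margX, diagCoupling]

lemma margY_diagCoupling (P : A → ℝ) : margY (diagCoupling P) = P := by
  ext b
  simp [margY, diagCoupling]

lemma IsPMF.diagCoupling (hP : IsPMF P) : IsPMF (diagCoupling P) := by
  refine ⟨fun q => ?_, ?_⟩
  · unfold _root_.diagCoupling
    split_ifs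
    exacts [hP.1 _, le_rfl]
  · rw [Fintype.sum_prod_type, ← hP.2]
    exact Finset.sum_congr rfl fun a _ => congrFun (margX_diagCoupling P) a

lemma expDist_diagCoupling (hd : ∀ a, d a a = 0) (P : A → ℝ) :
    expDist d (diagCoupling P) = 0 := by
  refine Finset.sum_eq_zero fun q _ => ?_
  by_cases h : q.1 = q.2
  · rw [h, hd, mul_zero]
  · simp [diagCoupling, h]

/-- `Q` is feasible in the minimization defining `Dtilde d Δ PY P`: a joint PMF with second
marginal `PY` and expected distortion at most `Δ`. -/
structure IsAdmissible (d : A → A → ℝ) (Δ : ℝ) (PY : A → ℝ) (Q : A × A → ℝ) : Prop where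
  isPMF : IsPMF Q
  margY_eq : margY Q = PY
  expDist_le : expDist d Q ≤ Δ

lemma isAdmissible_diagCoupling (hd : ∀ a, d a a = 0) (hΔ : 0 ≤ Δ) (hP : IsPMF P) :
    IsAdmissible d Δ P (diagCoupling P) :=
  ⟨hP.diagCoupling, margY_diagCoupling P, (expDist_diagCoupling hd P).trans_le hΔ⟩

lemma IsAdmissible.smul_add_smul (hQ : IsAdmissible d Δ PY Q) (hQ' : IsAdmissible d Δ PY' Q')
    {s t : ℝ} (hs : 0 ≤ s) (ht : 0 ≤ t) (hst : s + t = 1) :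
    IsAdmissible d Δ (s • PY + t • PY') (s • Q + t • Q') where
  isPMF := hQ.isPMF.smul_add_smul hQ'.isPMF hs ht hst
  margY_eq := by rw [margY_smul_add_smul, hQ.margY_eq, hQ'.margY_eq]
  expDist_le := by
    rw [expDist_smul_add_smul]
    exact convex_Iic Δ hQ.expDist_le hQ'.expDist_le hs ht hst

lemma IsAdmissible.one_sub_sum_le_klDiv (hQ : IsAdmissible d Δ PY Q) (hP : ∀ a, 0 < P a) :
    1 - ∑ a, P a ≤ klDiv (margX Q) P := by
  rw [← hQ.isPMF.margX.2]
  exact sum_sub_sum_le_klDiv hP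

lemma Dtilde_le (hP : ∀ a, 0 < P a) (hQ : IsAdmissible d Δ PY Q) :
    Dtilde d Δ PY P ≤ klDiv (margX Q) P := by
  refine csInf_le ⟨1 - ∑ a, P a, ?_⟩ ⟨Q, hQ.isPMF, hQ.margY_eq, hQ.expDist_le, rfl⟩
  rintro _ ⟨R, hR, hRY, hRd, rfl⟩
  exact IsAdmissible.one_sub_sum_le_klDiv ⟨hR, hRY, hRd⟩ hP

lemma exists_isAdmissible_klDiv_lt (hd : ∀ a, d a a = 0) (hΔ : 0 ≤ Δ) (hPY : IsPMF PY) {c : ℝ}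
    (hc : Dtilde d Δ PY P < c) : ∃ Q, IsAdmissible d Δ PY Q ∧ klDiv (margX Q) P < c := by
  have hdiag := isAdmissible_diagCoupling hd hΔ hPY
  obtain ⟨_, ⟨Q, hQ, hQY, hQd, rfl⟩, hlt⟩ := exists_lt_of_csInf_lt
    (by exact ⟨_, _, hdiag.isPMF, hdiag.margY_eq, hdiag.expDist_le, rfl⟩) hc
  exact ⟨Q, ⟨hQ, hQY, hQd⟩, hlt⟩

lemma one_sub_sum_le_Dtilde (hd : ∀ a, d a a = 0) (hΔ : 0 ≤ Δ) (hPY : IsPMF PY)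
    (hP : ∀ a, 0 < P a) : 1 - ∑ a, P a ≤ Dtilde d Δ PY P := by
  refine le_of_forall_gt_imp_ge_of_dense fun c hc => ?_
  obtain ⟨Q, hQ, hlt⟩ := exists_isAdmissible_klDiv_lt hd hΔ hPY hc
  exact (hQ.one_sub_sum_le_klDiv hP).trans hlt.le

/-- The false-negative exponent: the least `D̃_{Δ₁}(P_Y, P₁)` over the PMFs `P_Y` that the rule
takes for outputs of a `P₀`-source, the two players having distortions `d₀` and `d₁`. -/
def npExponent (d₀ d₁ : A → A → ℝ) (P₀ P₁ : A → ℝ) (Δ₀ Δ₁ lam : ℝ) : ℝ :=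
  sInf {v | ∃ PY : A → ℝ, IsPMF PY ∧ Dtilde d₀ Δ₀ PY P₀ ≤ lam ∧ v = Dtilde d₁ Δ₁ PY P₁}

variable {d₀ d₁ : A → A → ℝ} {P₀ P₁ : A → ℝ} {Δ₀ Δ₁ lam c : ℝ}

lemma npExponent_le (hd₁ : ∀ a, d₁ a a = 0) (hP₁ : ∀ a, 0 < P₁ a) (hΔ₁ : 0 ≤ Δ₁)
    (hPY : IsPMF PY) (hlam : Dtilde d₀ Δ₀ PY P₀ ≤ lam) :
    npExponent d₀ d₁ P₀ P₁ Δ₀ Δ₁ lam ≤ Dtilde d₁ Δ₁ PY P₁ := by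
  refine csInf_le ⟨1 - ∑ a, P₁ a, ?_⟩ ⟨PY, hPY, hlam, rfl⟩
  rintro _ ⟨R, hR, -, rfl⟩
  exact one_sub_sum_le_Dtilde hd₁ hΔ₁ hR hP₁

lemma exists_Dtilde_lt_of_npExponent_lt (hd₀ : ∀ a, d₀ a a = 0) (hP₀ : IsPMF P₀)
    (hP₀pos : ∀ a, 0 < P₀ a) (hΔ₀ : 0 ≤ Δ₀) (hlam : 0 ≤ lam)
    (hc : npExponent d₀ d₁ P₀ P₁ Δ₀ Δ₁ lam < c) :
    ∃ PY, IsPMF PY ∧ Dtilde d₀ Δ₀ PY P₀ ≤ lam ∧ Dtilde d₁ Δ₁ PY P₁ < c := by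
  have hP₀lam : Dtilde d₀ Δ₀ P₀ P₀ ≤ lam := by
    refine (Dtilde_le hP₀pos (isAdmissible_diagCoupling hd₀ hΔ₀ hP₀)).trans ?_
    rwa [margX_diagCoupling, klDiv_self hP₀pos]
  obtain ⟨_, ⟨PY, hPY, hY, rfl⟩, hlt⟩ :=
    exists_lt_of_csInf_lt (by exact ⟨_, P₀, hP₀, hP₀lam, rfl⟩) hc
  exact ⟨PY, hPY, hY, hlt⟩

lemma klDiv_mix_diagCoupling_le (hQ : IsPMF Q) {R : A → ℝ} (hR : IsPMF R) (hP : ∀ a, 0 < P a)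
    {t : ℝ} (ht₀ : 0 ≤ t) (ht₁ : t ≤ 1) :
    klDiv (margX ((1 - t) • Q + t • diagCoupling R)) P ≤
      (1 - t) * klDiv (margX Q) P + t * klDiv R P := by
  rw [margX_smul_add_smul, margX_diagCoupling]
  exact (convexOn_klDiv hP).2 hQ.margX.1 hR.1 (sub_nonneg.2 ht₁) ht₀ (sub_add_cancel 1 t)

lemma exists_mixing_weight {u : ℝ} (huc : u < c) (v : ℝ) :
    ∃ t : ℝ, 0 < t ∧ t < 1 ∧ (1 - t) * u + t * v < c := by
  have hcont : Tendsto (fun t : ℝ => (1 - t) * u + t * v) (nhds 0) (nhds u) := by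
    simpa using (by fun_prop : Continuous fun t : ℝ => (1 - t) * u + t * v).tendsto 0
  obtain ⟨t, hlt, ht⟩ := ((hcont.eventually_lt_const huc).filter_mono nhdsWithin_le_nhds
    |>.and (Ioo_mem_nhdsGT (zero_lt_one (α := ℝ)))).exists
  exact ⟨t, ht.1, ht.2, hlt⟩

/- Mixing with the diagonal coupling of `P₀` does three things at once: it keeps the two second
marginals equal, it makes the constraint `D(·‖P₀) ≤ lam` strict, and it puts mass on the whole
diagonal, where rounding to integer counts costs no distortion. -/
lemma exists_admissible_pair_of_npExponent_lt (hd₀ : ∀ a, d₀ a a = 0) (hd₁ : ∀ a, d₁ a a = 0)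
    (hP₀ : IsPMF P₀) (hP₀pos : ∀ a, 0 < P₀ a) (hP₁ : ∀ a, 0 < P₁ a)
    (hΔ₀ : 0 ≤ Δ₀) (hΔ₁ : 0 ≤ Δ₁) (hlam : 0 < lam)
    (hc : npExponent d₀ d₁ P₀ P₁ Δ₀ Δ₁ lam < c) :
    ∃ PY Q₀ Q₁, IsAdmissible d₀ Δ₀ PY Q₀ ∧ IsAdmissible d₁ Δ₁ PY Q₁ ∧
      (∀ b, 0 < Q₀ (b, b)) ∧ (∀ b, 0 < Q₁ (b, b)) ∧
      klDiv (margX Q₀) P₀ < lam ∧ klDiv (margX Q₁) P₁ < c := by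
  obtain ⟨PY, hPY, hY₀, hY₁⟩ := exists_Dtilde_lt_of_npExponent_lt hd₀ hP₀ hP₀pos hΔ₀ hlam.le hc
  obtain ⟨Q₁, hQ₁, hlt₁⟩ := exists_isAdmissible_klDiv_lt hd₁ hΔ₁ hPY hY₁
  obtain ⟨t, ht₀, ht₁, htc⟩ := exists_mixing_weight hlt₁ (klDiv P₀ P₁)
  have hs : 0 < 1 - t := sub_pos.2 ht₁
  have hlam' : lam < lam / (1 - t) := by rw [lt_div_iff₀ hs]; nlinarith
  obtain ⟨Q₀, hQ₀, hlt₀⟩ := exists_isAdmissible_klDiv_lt hd₀ hΔ₀ hPY (hY₀.trans_lt hlam')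
  have hdiag : ∀ {Q : A × A → ℝ}, IsPMF Q → ∀ b, 0 < ((1 - t) • Q + t • diagCoupling P₀) (b, b) :=
    fun hQ b => by simpa [diagCoupling] using
      add_pos_of_nonneg_of_pos (mul_nonneg hs.le (hQ.1 (b, b))) (mul_pos ht₀ (hP₀pos b))
  refine ⟨_, _, _,
    hQ₀.smul_add_smul (isAdmissible_diagCoupling hd₀ hΔ₀ hP₀) hs.le ht₀.le (sub_add_cancel 1 t),
    hQ₁.smul_add_smul (isAdmissible_diagCoupling hd₁ hΔ₁ hP₀) hs.le ht₀.le (sub_add_cancel 1 t),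
    hdiag hQ₀.isPMF, hdiag hQ₁.isPMF, ?_, ?_⟩
  · refine (klDiv_mix_diagCoupling_le hQ₀.isPMF hP₀ hP₀pos ht₀.le ht₁.le).trans_lt ?_
    rwa [klDiv_self hP₀pos, mul_zero, add_zero, mul_comm, ← lt_div_iff₀ hs]
  · exact (klDiv_mix_diagCoupling_le hQ₁.isPMF hP₀ hP₁ ht₀.le ht₁.le).trans_lt htc

end Couplings

section Types

variable {B : Type*} [DecidableEq B] {n : ℕ}

/-- The number of occurrences of the letter `b` in `x`: the type of `x`, unnormalized. Types of
pairs of sequences are the counts of `fun i => (x i, y i)`. -/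
def letterCount (x : Fin n → B) (b : B) : ℕ := (univ.filter fun i => x i = b).card

lemma letterCount_le (x : Fin n → B) (b : B) : letterCount x b ≤ n :=
  (Finset.card_le_univ _).trans (Fintype.card_fin n).le

lemma letterCount_comp_perm (x : Fin n → B) (σ : Equiv.Perm (Fin n)) :
    letterCount (x ∘ σ) = letterCount x := by
  ext b
  exact Finset.card_equiv σ fun i => by simp

lemma exists_perm_of_letterCount_eq {x y : Fin n → B} (h : letterCount x = letterCount y) :
    ∃ σ : Equiv.Perm (Fin n), x = y ∘ σ := by
  have hfiber : ∀ b, Nonempty ({i // x i = b} ≃ {i // y i = b}) := fun b =>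
    ⟨Fintype.equivOfCardEq (by simpa only [Fintype.card_subtype, letterCount] using congrFun h b)⟩
  exact ⟨Equiv.ofFiberEquiv fun b => (hfiber b).some,
    funext fun i => (Equiv.ofFiberEquiv_map _ i).symm⟩

section Fintype

variable [Fintype B]

lemma sum_letterCount (x : Fin n → B) : ∑ b, letterCount x b = n := by
  simpa [letterCount] using
    (Finset.card_eq_sum_card_fiberwise (f := x) (s := univ) (t := univ) (by simp)).symm

lemma sum_comp_eq_sum_letterCount_mul (x : Fin n → B) (f : B → ℝ) :
    ∑ i, f (x i) = ∑ b, (letterCount x b : ℝ) * f b := by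
  simp only [← Finset.sum_fiberwise' univ x f, Finset.sum_const, nsmul_eq_mul, letterCount]

lemma prod_comp_eq_prod_pow_letterCount (x : Fin n → B) (f : B → ℝ) :
    ∏ i, f (x i) = ∏ b, f b ^ letterCount x b := by
  simp only [← Finset.prod_fiberwise' univ x f, Finset.prod_const, letterCount]

lemma exists_letterCount_eq {N : B → ℕ} (hN : ∑ b, N b = n) :
    ∃ x : Fin n → B, letterCount x = N := by
  have e : Fin n ≃ Σ b, Fin (N b) := Fintype.equivOfCardEq (by simp [hN])
  refine ⟨fun i => (e i).1, funext fun b => ?_⟩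
  calc letterCount (fun i => (e i).1) b
      = Fintype.card {i // (e i).1 = b} := (Fintype.card_subtype _).symm
    _ = Fintype.card {p : Σ b, Fin (N b) // p.1 = b} :=
        Fintype.card_congr (e.subtypeEquiv fun _ => Iff.rfl)
    _ = N b := by rw [Fintype.card_congr (Equiv.sigmaSubtype b), Fintype.card_fin]

lemma card_image_letterCount_le (s : Finset (Fin n → B)) :
    (s.image letterCount).card ≤ (n + 1) ^ Fintype.card B := by
  calc (s.image letterCount).card
      ≤ (Fintype.piFinset fun _ : B => Finset.range (n + 1)).card := by
        refine Finset.card_le_card (Finset.image_subset_iff.2 fun x _ => ?_)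
        simpa [Nat.lt_succ_iff] using letterCount_le x
    _ = (n + 1) ^ Fintype.card B := by simp

/-- The type class of `x`: all sequences with the same letter counts. -/
def typeClass (x : Fin n → B) : Finset (Fin n → B) :=
  univ.filter fun y => letterCount y = letterCount x

lemma mem_typeClass {x y : Fin n → B} : y ∈ typeClass x ↔ letterCount y = letterCount x := by
  simp [typeClass]

lemma sum_le_mul_of_sum_typeClass_le {f : (Fin n → B) → ℝ} {c : ℝ} (hc : 0 ≤ c)
    (h : ∀ x, ∑ z ∈ typeClass x, f z ≤ c) :
    ∑ x, f x ≤ ((n : ℝ) + 1) ^ Fintype.card B * c := by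
  have hmaps : ∀ x ∈ (univ : Finset (Fin n → B)), letterCount x ∈ univ.image letterCount :=
    fun x hx => Finset.mem_image_of_mem _ hx
  calc ∑ x, f x
      = ∑ N ∈ univ.image letterCount, ∑ x ∈ univ.filter (letterCount · = N), f x :=
        (Finset.sum_fiberwise_of_maps_to hmaps f).symm
    _ ≤ (univ.image (letterCount : (Fin n → B) → B → ℕ)).card • c := by
        refine Finset.sum_le_card_nsmul _ _ c fun N hN => ?_
        obtain ⟨x, -, rfl⟩ := Finset.mem_image.1 hN
        exact h x
    _ ≤ ((n : ℝ) + 1) ^ Fintype.card B * c := by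
        rw [nsmul_eq_mul]
        exact mul_le_mul_of_nonneg_right (mod_cast card_image_letterCount_le _) hc

lemma card_typeClass_mul_prod_factorial (x : Fin n → B) :
    (typeClass x).card * ∏ b, (letterCount x b).factorial = n.factorial := by
  have horbit : (typeClass x : Set (Fin n → B)) = MulAction.orbit (Equiv.Perm (Fin n))ᵈᵐᵃ x := by
    ext y
    rw [Finset.mem_coe, mem_typeClass]
    constructor
    · intro h
      obtain ⟨σ, rfl⟩ := exists_perm_of_letterCount_eq h
      exact ⟨DomMulAct.mk σ, rfl⟩
    · rintro ⟨σ, rfl⟩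
      exact letterCount_comp_perm x _
  have hstab : Nat.card (MulAction.stabilizer (Equiv.Perm (Fin n))ᵈᵐᵃ x) =
      ∏ b, (letterCount x b).factorial :=
    calc _ = Nat.card {σ : Equiv.Perm (Fin n) // x ∘ σ = x} :=
          Nat.card_congr (DomMulAct.mk.symm.subtypeEquiv fun _ => Iff.rfl)
      _ = ∏ b, (letterCount x b).factorial := by
          rw [Nat.card_eq_fintype_card, DomMulAct.stabilizer_card]
          simp only [Fintype.card_subtype, letterCount]
  rw [← Set.ncard_coe_finset, horbit, ← MulAction.index_stabilizer, ← hstab,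
    Subgroup.index_mul_card, Nat.card_congr DomMulAct.mk.symm, Nat.card_perm, Nat.card_fin]

end Fintype

end Types

lemma seqProb_nonneg {A : Type} {n : ℕ} {P : A → ℝ} (hP : 0 ≤ P) (x : Fin n → A) :
    0 ≤ seqProb P x :=
  Finset.prod_nonneg fun _ _ => hP _

lemma sum_seqProb {A : Type} [Fintype A] (P : A → ℝ) (n : ℕ) :
    ∑ x : Fin n → A, seqProb P x = (∑ a, P a) ^ n :=
  (Fintype.sum_pow P n).symm

lemma seqProb_congr {A : Type} [DecidableEq A] {n : ℕ} (P : A → ℝ) {x y : Fin n → A}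
    (h : letterCount x = letterCount y) : seqProb P x = seqProb P y := by
  obtain ⟨σ, rfl⟩ := exists_perm_of_letterCount_eq h
  exact Equiv.prod_comp σ fun i => P (y i)

section EmpiricalPMF

variable {A : Type} [Fintype A] [DecidableEq A] {n : ℕ}

lemma empP_eq_div (x : Fin n → A) (a : A) : empP x a = letterCount x a / n := rfl

lemma empP_nonneg (x : Fin n → A) : 0 ≤ empP x := fun a => by
  rw [Pi.zero_apply, empP_eq_div]
  positivity

lemma mul_empP (x : Fin n → A) (a : A) : n * empP x a = letterCount x a := by
  rcases n.eq_zero_or_pos with rfl | hn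
  · simp [letterCount]
  · rw [empP_eq_div]
    field_simp

lemma isPMF_empP (hn : 0 < n) (x : Fin n → A) : IsPMF (empP x) := by
  refine ⟨empP_nonneg x, ?_⟩
  simp_rw [empP_eq_div, ← Finset.sum_div, ← Nat.cast_sum, sum_letterCount]
  exact div_self (Nat.cast_ne_zero.2 hn.ne')

lemma empP_congr {x y : Fin n → A} (h : letterCount x = letterCount y) : empP x = empP y := by
  ext a
  rw [empP_eq_div, empP_eq_div, h]

lemma sum_seqProb_empP (x : Fin n → A) : ∑ z : Fin n → A, seqProb (empP x) z = 1 := by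
  rw [sum_seqProb]
  rcases n.eq_zero_or_pos with rfl | hn
  · exact pow_zero _
  · rw [(isPMF_empP hn x).2, one_pow]

lemma seqProb_eq_prod_pow (P : A → ℝ) (x : Fin n → A) :
    seqProb P x = ∏ a, P a ^ letterCount x a :=
  prod_comp_eq_prod_pow_letterCount x P

lemma seqProb_eq_exp_mul {P : A → ℝ} (hP : ∀ a, 0 < P a) (x : Fin n → A) :
    seqProb P x = Real.exp (-(n * klDiv (empP x) P)) * seqProb (empP x) x := by
  have hpos : ∀ i, 0 < empP x (x i) := fun i => by
    have hi : 0 < letterCount x (x i) := Finset.card_pos.2 ⟨i, by simp⟩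
    have hn : 0 < n := i.pos
    rw [empP_eq_div]
    positivity
  have hdiv : n * klDiv (empP x) P = ∑ i, Real.log (empP x (x i) / P (x i)) := by
    rw [sum_comp_eq_sum_letterCount_mul x fun a => Real.log (empP x a / P a), klDiv,
      Finset.mul_sum]
    refine Finset.sum_congr rfl fun a _ => ?_
    split_ifs with ha
    · rw [← mul_assoc, mul_empP]
    · rw [← mul_empP, le_antisymm (not_lt.mp ha) (empP_nonneg x a), mul_zero, zero_mul]
  rw [hdiv, ← Finset.sum_neg_distrib, Real.exp_sum, seqProb, seqProb, ← Finset.prod_mul_distrib]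
  refine Finset.prod_congr rfl fun i _ => ?_
  rw [← Real.log_inv, Real.exp_log (inv_pos.2 (div_pos (hpos i) (hP _))), inv_div,
    div_mul_cancel₀ _ (hpos i).ne']

lemma sum_typeClass_seqProb (P : A → ℝ) (x : Fin n → A) :
    ∑ z ∈ typeClass x, seqProb P z = (typeClass x).card * seqProb P x := by
  rw [← nsmul_eq_mul]
  exact Finset.sum_eq_card_nsmul fun z hz => seqProb_congr P (mem_typeClass.1 hz)

lemma card_typeClass_mul_seqProb_empP_le_one (x : Fin n → A) :
    (typeClass x).card * seqProb (empP x) x ≤ 1 := by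
  rw [← sum_typeClass_seqProb, ← sum_seqProb_empP x]
  exact Finset.sum_le_univ_sum_of_nonneg fun z => seqProb_nonneg (empP_nonneg x) z

lemma sum_seqProb_empP_self_le (n : ℕ) :
    ∑ x : Fin n → A, seqProb (empP x) x ≤ ((n : ℝ) + 1) ^ Fintype.card A := by
  rw [← mul_one (((n : ℝ) + 1) ^ _)]
  refine sum_le_mul_of_sum_typeClass_le zero_le_one fun x => ?_
  refine le_of_eq_of_le ?_ (card_typeClass_mul_seqProb_empP_le_one x)
  rw [← sum_typeClass_seqProb]
  exact Finset.sum_congr rfl fun z hz => by rw [empP_congr (mem_typeClass.1 hz)]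

lemma factorial_mul_pow_le_factorial_mul_pow (j k : ℕ) :
    j.factorial * j ^ k ≤ k.factorial * j ^ j := by
  rcases le_total j k with hjk | hkj
  · calc j.factorial * j ^ k = j.factorial * j ^ (k - j) * j ^ j := by
          rw [mul_assoc, ← pow_add, Nat.sub_add_cancel hjk]
      _ ≤ k.factorial * j ^ j := Nat.mul_le_mul_right _ (Nat.factorial_mul_pow_sub_le_factorial hjk)
  · calc j.factorial * j ^ k = k.factorial * j.descFactorial (j - k) * j ^ k := by
          rw [← Nat.factorial_mul_descFactorial (Nat.sub_le j k), Nat.sub_sub_self hkj]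
      _ ≤ k.factorial * j ^ (j - k) * j ^ k := by
          gcongr
          exact Nat.descFactorial_le_pow _ _
      _ = k.factorial * j ^ j := by rw [mul_assoc, ← pow_add, Nat.sub_add_cancel hkj]

lemma card_typeClass_mul_prod_pow_le (x z : Fin n → A) :
    (typeClass z).card * ∏ a, letterCount x a ^ letterCount z a ≤
      (typeClass x).card * ∏ a, letterCount x a ^ letterCount x a := by
  have hletter : (∏ a, (letterCount x a).factorial) * ∏ a, letterCount x a ^ letterCount z a ≤
      (∏ a, (letterCount z a).factorial) * ∏ a, letterCount x a ^ letterCount x a := by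
    simp only [← Finset.prod_mul_distrib]
    exact Finset.prod_le_prod' fun a _ => factorial_mul_pow_le_factorial_mul_pow _ _
  have hcard := (card_typeClass_mul_prod_factorial z).trans
    (card_typeClass_mul_prod_factorial x).symm
  have hpos : 0 < ∏ a, (letterCount x a).factorial :=
    Finset.prod_pos fun a _ => (letterCount x a).factorial_pos
  refine Nat.le_of_mul_le_mul_right ?_ hpos
  calc _ = (typeClass z).card *
        ((∏ a, (letterCount x a).factorial) * ∏ a, letterCount x a ^ letterCount z a) := by ring
    _ ≤ (typeClass z).card *
        ((∏ a, (letterCount z a).factorial) * ∏ a, letterCount x a ^ letterCount x a) :=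
      Nat.mul_le_mul_left _ hletter
    _ = _ := by rw [← mul_assoc, hcard]; ring

lemma card_typeClass_mul_seqProb_empP_le (x z : Fin n → A) :
    (typeClass z).card * seqProb (empP x) z ≤ (typeClass x).card * seqProb (empP x) x := by
  have hempP : ∀ y : Fin n → A,
      seqProb (empP x) y = (∏ a, (letterCount x a : ℝ) ^ letterCount y a) / n ^ n := fun y => by
    simp only [seqProb_eq_prod_pow, empP_eq_div, div_pow, Finset.prod_div_distrib,
      Finset.prod_pow_eq_pow_sum, sum_letterCount]
  rw [hempP, hempP, ← mul_div_assoc, ← mul_div_assoc]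
  exact div_le_div_of_nonneg_right (mod_cast card_typeClass_mul_prod_pow_le x z) (by positivity)

lemma one_le_mul_card_typeClass_mul_seqProb_empP (x : Fin n → A) :
    1 ≤ ((n : ℝ) + 1) ^ Fintype.card A * ((typeClass x).card * seqProb (empP x) x) := by
  refine (sum_seqProb_empP x).ge.trans <| sum_le_mul_of_sum_typeClass_le
    (mul_nonneg (Nat.cast_nonneg _) (seqProb_nonneg (empP_nonneg x) x)) fun z => ?_
  rw [sum_typeClass_seqProb]
  exact card_typeClass_mul_seqProb_empP_le x z

lemma exp_neg_mul_klDiv_le {P : A → ℝ} (hP : ∀ a, 0 < P a) (x : Fin n → A) :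
    Real.exp (-(n * klDiv (empP x) P)) ≤
      ((n : ℝ) + 1) ^ Fintype.card A * ((typeClass x).card * seqProb P x) := by
  calc Real.exp (-(n * klDiv (empP x) P))
      ≤ Real.exp (-(n * klDiv (empP x) P)) *
          (((n : ℝ) + 1) ^ Fintype.card A * ((typeClass x).card * seqProb (empP x) x)) :=
        le_mul_of_one_le_right (Real.exp_nonneg _) (one_le_mul_card_typeClass_mul_seqProb_empP x)
    _ = ((n : ℝ) + 1) ^ Fintype.card A * ((typeClass x).card * seqProb P x) := by
        rw [seqProb_eq_exp_mul hP x]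
        ring

end EmpiricalPMF

section JointTypes

variable {n : ℕ}

lemma letterCount_fst {B C : Type*} [DecidableEq B] [Fintype C] [DecidableEq C]
    (z : Fin n → B × C) (b : B) :
    letterCount (fun i => (z i).1) b = ∑ c, letterCount z (b, c) := by
  simp only [letterCount]
  rw [Finset.card_eq_sum_card_fiberwise (f := fun i => (z i).2) (t := univ) (by simp)]
  simp only [Finset.filter_filter, Prod.ext_iff]

lemma letterCount_snd {B C : Type*} [Fintype B] [DecidableEq B] [DecidableEq C]
    (z : Fin n → B × C) (c : C) :
    letterCount (fun i => (z i).2) c = ∑ b, letterCount z (b, c) := by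
  simp only [letterCount]
  rw [Finset.card_eq_sum_card_fiberwise (f := fun i => (z i).1) (t := univ) (by simp)]
  simp only [Finset.filter_filter, Prod.ext_iff, and_comm]

variable {A : Type} [Fintype A] [DecidableEq A] {d : A → A → ℝ} {Δ : ℝ}

lemma margX_empP (z : Fin n → A × A) : margX (empP z) = empP fun i => (z i).1 := by
  ext a
  simp only [margX, empP_eq_div, letterCount_fst, Nat.cast_sum, Finset.sum_div]

lemma margY_empP (z : Fin n → A × A) : margY (empP z) = empP fun i => (z i).2 := by
  ext b
  simp only [margY, empP_eq_div, letterCount_snd, Nat.cast_sum, Finset.sum_div]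

lemma dSeq_eq_sum_letterCount_mul (d : A → A → ℝ) (x y : Fin n → A) :
    dSeq d x y = ∑ q : A × A, (letterCount (fun i => (x i, y i)) q : ℝ) * d q.1 q.2 :=
  sum_comp_eq_sum_letterCount_mul (fun i => (x i, y i)) fun q => d q.1 q.2

lemma isAdmissible_empP (hn : 0 < n) {x y : Fin n → A} (hxy : dSeq d x y ≤ n * Δ) :
    IsAdmissible d Δ (empP y) (empP fun i => (x i, y i)) where
  isPMF := isPMF_empP hn _
  margY_eq := margY_empP _
  expDist_le := by
    have hn' : (0 : ℝ) < n := Nat.cast_pos.2 hn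
    refine le_of_mul_le_mul_left (hxy.trans_eq' ?_) hn'
    simp only [dSeq_eq_sum_letterCount_mul, expDist, Finset.mul_sum, ← mul_assoc, mul_empP]

lemma Dtilde_empP_le {P : A → ℝ} (hP : ∀ a, 0 < P a) (hn : 0 < n) {x y : Fin n → A}
    (hxy : dSeq d x y ≤ n * Δ) : Dtilde d Δ (empP y) P ≤ klDiv (empP x) P := by
  rw [← margX_empP fun i => (x i, y i)]
  exact Dtilde_le hP (isAdmissible_empP hn hxy)

end JointTypes

lemma dSeq_self {A : Type} {n : ℕ} {d : A → A → ℝ} (hd : ∀ a, d a a = 0) (x : Fin n → A) :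
    dSeq d x x = 0 :=
  Finset.sum_eq_zero fun _ _ => hd _

lemma dSeq_comp_perm {A : Type} {n : ℕ} (d : A → A → ℝ) (x y : Fin n → A)
    (σ : Equiv.Perm (Fin n)) : dSeq d (x ∘ σ) (y ∘ σ) = dSeq d x y :=
  Equiv.sum_comp σ fun i => d (x i) (y i)

section AttackChannel

variable {A : Type} [Fintype A] [DecidableEq A] {n : ℕ} {d : A → A → ℝ} {Δ : ℝ}
  {x y y' : Fin n → A}

lemma mem_condTypeClass : y' ∈ condTypeClass x y ↔
    letterCount (fun i => (x i, y' i)) = letterCount (fun i => (x i, y i)) := by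
  simp [condTypeClass, letterCount, funext_iff]

lemma mem_condTypeClass_self (x y : Fin n → A) : y ∈ condTypeClass x y :=
  mem_condTypeClass.2 rfl

lemma condTypeClass_eq_of_mem (h : y' ∈ condTypeClass x y) :
    condTypeClass x y' = condTypeClass x y := by
  ext w
  rw [mem_condTypeClass, mem_condTypeClass, mem_condTypeClass.1 h]

lemma dSeq_eq_of_mem_condTypeClass (d : A → A → ℝ) (h : y' ∈ condTypeClass x y) :
    dSeq d x y' = dSeq d x y := by
  rw [dSeq_eq_sum_letterCount_mul, dSeq_eq_sum_letterCount_mul, mem_condTypeClass.1 h]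

lemma mem_typeClass_of_mem_condTypeClass (h : y' ∈ condTypeClass x y) : y' ∈ typeClass y := by
  rw [mem_typeClass]
  ext b
  rw [letterCount_snd fun i => (x i, y' i), letterCount_snd fun i => (x i, y i),
    mem_condTypeClass.1 h]

lemma numCondTypes_le (dn : (Fin n → A) → (Fin n → A) → ℝ) (Δ : ℝ) (x : Fin n → A) :
    numCondTypes dn Δ x ≤ (n + 1) ^ Fintype.card (A × A) := by
  let classOf (N : A × A → ℕ) : Finset (Fin n → A) :=
    univ.filter fun y' => letterCount (fun i => (x i, y' i)) = N
  have hclass : ∀ y, condTypeClass x y = classOf (letterCount fun i => (x i, y i)) := fun y => by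
    ext y'
    simp [classOf, mem_condTypeClass]
  calc numCondTypes dn Δ x
      ≤ ((univ.image letterCount).image classOf).card := by
        refine Finset.card_le_card (Finset.image_subset_iff.2 fun y _ => ?_)
        rw [hclass]
        exact Finset.mem_image_of_mem _ (Finset.mem_image_of_mem _ (Finset.mem_univ _))
    _ ≤ (n + 1) ^ Fintype.card (A × A) :=
        Finset.card_image_le.trans (card_image_letterCount_le _)

lemma numCondTypes_pos {dn : (Fin n → A) → (Fin n → A) → ℝ} (hxy : dn x y ≤ n * Δ) :
    0 < numCondTypes dn Δ x :=
  Finset.card_pos.2 ⟨_, Finset.mem_image_of_mem _ (Finset.mem_filter.2 ⟨Finset.mem_univ y, hxy⟩)⟩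

lemma Astar_nonneg (dn : (Fin n → A) → (Fin n → A) → ℝ) (Δ : ℝ) (x y : Fin n → A) :
    0 ≤ Astar dn Δ x y := by
  unfold Astar
  split_ifs <;> positivity

lemma sum_condTypeClass_Astar (hxy : dSeq d x y ≤ n * Δ) :
    ∑ y' ∈ condTypeClass x y, Astar (dSeq d) Δ x y' = (numCondTypes (dSeq d) Δ x : ℝ)⁻¹ := by
  have hconst : ∀ y' ∈ condTypeClass x y, Astar (dSeq d) Δ x y' =
      (numCondTypes (dSeq d) Δ x : ℝ)⁻¹ / (condTypeClass x y).card := fun y' hy' => by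
    rw [Astar, if_pos ((dSeq_eq_of_mem_condTypeClass d hy').trans_le hxy),
      condTypeClass_eq_of_mem hy']
  have hcard : ((condTypeClass x y).card : ℝ) ≠ 0 :=
    Nat.cast_ne_zero.2 (Finset.card_ne_zero_of_mem (mem_condTypeClass_self x y))
  rw [Finset.sum_eq_card_nsmul hconst, nsmul_eq_mul, mul_div_cancel₀ _ hcard]

lemma sum_Astar (hxy : dSeq d x y ≤ n * Δ) : ∑ y', Astar (dSeq d) Δ x y' = 1 := by
  set S := univ.filter fun y' => dSeq d x y' ≤ n * Δ with hS
  have hfiber : ∀ w ∈ S, S.filter (condTypeClass x · = condTypeClass x w) = condTypeClass x w := by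
    intro w hw
    ext y'
    refine ⟨fun h => (Finset.mem_filter.1 h).2 ▸ mem_condTypeClass_self x y', fun h => ?_⟩
    refine Finset.mem_filter.2 ⟨Finset.mem_filter.2 ⟨Finset.mem_univ _, ?_⟩,
      condTypeClass_eq_of_mem h⟩
    exact (dSeq_eq_of_mem_condTypeClass d h).trans_le (Finset.mem_filter.1 hw).2
  calc ∑ y', Astar (dSeq d) Δ x y'
      = ∑ y' ∈ S, Astar (dSeq d) Δ x y' := by
        refine (Finset.sum_subset (Finset.subset_univ S) fun y' _ hy' => if_neg ?_).symm
        simpa [hS] using hy'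
    _ = ∑ C ∈ S.image (condTypeClass x),
          ∑ y' ∈ S.filter (condTypeClass x · = C), Astar (dSeq d) Δ x y' :=
        (Finset.sum_fiberwise_of_maps_to (fun _ => Finset.mem_image_of_mem _) _).symm
    _ = (S.image (condTypeClass x)).card • (numCondTypes (dSeq d) Δ x : ℝ)⁻¹ := by
        refine Finset.sum_eq_card_nsmul fun C hC => ?_
        obtain ⟨w, hw, rfl⟩ := Finset.mem_image.1 hC
        rw [hfiber w hw, sum_condTypeClass_Astar (Finset.mem_filter.1 hw).2]
    _ = 1 := by
        rw [nsmul_eq_mul]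
        exact mul_inv_cancel₀ (Nat.cast_ne_zero.2 (numCondTypes_pos hxy).ne')

lemma InC_Astar (hd : ∀ a, d a a = 0) (hΔ : 0 ≤ Δ) (n : ℕ) :
    InC (dSeq d) Δ (Astar (dSeq d) Δ : (Fin n → A) → (Fin n → A) → ℝ) := by
  refine ⟨⟨Astar_nonneg _ _, fun x => sum_Astar (y := x) ?_⟩, fun x y hxy => if_neg hxy.not_ge⟩
  rw [dSeq_self hd]
  positivity

end AttackChannel

section FalseNegatives

variable {A : Type} [Fintype A] {n : ℕ} {P : A → ℝ} {Φ : (Fin n → A) → ℝ}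

lemma PFN_eq_sum_mul_sum (P : A → ℝ) (Φ : (Fin n → A) → ℝ) (W : (Fin n → A) → (Fin n → A) → ℝ) :
    PFN P Φ W = ∑ x, seqProb P x * ∑ y, W x y * (1 - Φ y) := by
  simp only [PFN, Finset.mul_sum, mul_assoc]

variable [DecidableEq A]

lemma PFN_le {dn W : (Fin n → A) → (Fin n → A) → ℝ} {Δ E : ℝ} (hP : ∀ a, 0 < P a)
    (hW : InC dn Δ W) (hΦ : 0 ≤ Φ)
    (hE : ∀ x y, dn x y ≤ n * Δ → Φ y < 1 → E ≤ klDiv (empP x) P) :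
    PFN P Φ W ≤ ((n : ℝ) + 1) ^ Fintype.card A * Real.exp (-(n * E)) := by
  have hterm : ∀ x, seqProb P x * ∑ y, W x y * (1 - Φ y) ≤
      seqProb (empP x) x * Real.exp (-(n * E)) := by
    intro x
    have hseq : 0 ≤ seqProb (empP x) x := seqProb_nonneg (empP_nonneg x) x
    by_cases hx : E ≤ klDiv (empP x) P
    · have hsum : ∑ y, W x y * (1 - Φ y) ≤ 1 := by
        refine (Finset.sum_le_sum fun y _ => ?_).trans_eq (hW.1.2 x)
        exact mul_le_of_le_one_right (hW.1.1 x y) (sub_le_self 1 (hΦ y))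
      calc seqProb P x * ∑ y, W x y * (1 - Φ y)
          ≤ seqProb P x := mul_le_of_le_one_right (seqProb_nonneg (fun a => (hP a).le) x) hsum
        _ = seqProb (empP x) x * Real.exp (-(n * klDiv (empP x) P)) := by
            rw [seqProb_eq_exp_mul hP, mul_comm]
        _ ≤ seqProb (empP x) x * Real.exp (-(n * E)) := by gcongr
    · have hsum : ∑ y, W x y * (1 - Φ y) ≤ 0 := by
        refine Finset.sum_nonpos fun y _ => ?_
        rcases le_or_gt (dn x y) (n * Δ) with hy | hy
        · have hΦy : 1 ≤ Φ y := not_lt.1 fun h => hx (hE x y hy h)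
          exact mul_nonpos_of_nonneg_of_nonpos (hW.1.1 x y) (sub_nonpos.2 hΦy)
        · rw [hW.2 x y hy, zero_mul]
      exact (mul_nonpos_of_nonneg_of_nonpos (seqProb_nonneg (fun a => (hP a).le) x) hsum).trans
        (mul_nonneg hseq (Real.exp_nonneg _))
  calc PFN P Φ W ≤ ∑ x, seqProb (empP x) x * Real.exp (-(n * E)) := by
        rw [PFN_eq_sum_mul_sum]
        exact Finset.sum_le_sum fun x _ => hterm x
    _ ≤ ((n : ℝ) + 1) ^ Fintype.card A * Real.exp (-(n * E)) := by
        rw [← Finset.sum_mul]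
        exact mul_le_mul_of_nonneg_right (sum_seqProb_empP_self_le n) (Real.exp_nonneg _)

variable {d : A → A → ℝ} {Δ κ : ℝ} {x y : Fin n → A}

lemma le_sum_Astar_mul_one_sub (hΦ : Φ ≤ 1) (hxy : dSeq d x y ≤ n * Δ) (hκ : 0 ≤ κ)
    (hκΦ : ∀ y' ∈ typeClass y, κ ≤ 1 - Φ y') :
    κ * (((n : ℝ) + 1) ^ Fintype.card (A × A))⁻¹ ≤
      ∑ y', Astar (dSeq d) Δ x y' * (1 - Φ y') := by
  have hnum : ((numCondTypes (dSeq d) Δ x : ℕ) : ℝ) ≤ ((n : ℝ) + 1) ^ Fintype.card (A × A) :=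
    mod_cast numCondTypes_le (dSeq d) Δ x
  calc κ * (((n : ℝ) + 1) ^ Fintype.card (A × A))⁻¹
      ≤ κ * (numCondTypes (dSeq d) Δ x : ℝ)⁻¹ := by
        have := numCondTypes_pos hxy
        gcongr
    _ = ∑ y' ∈ condTypeClass x y, Astar (dSeq d) Δ x y' * κ := by
        rw [← Finset.sum_mul, sum_condTypeClass_Astar hxy, mul_comm]
    _ ≤ ∑ y' ∈ condTypeClass x y, Astar (dSeq d) Δ x y' * (1 - Φ y') :=
        Finset.sum_le_sum fun y' hy' => mul_le_mul_of_nonneg_left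
          (hκΦ y' (mem_typeClass_of_mem_condTypeClass hy')) (Astar_nonneg _ _ _ _)
    _ ≤ ∑ y', Astar (dSeq d) Δ x y' * (1 - Φ y') :=
        Finset.sum_le_univ_sum_of_nonneg fun y' =>
          mul_nonneg (Astar_nonneg _ _ _ _) (sub_nonneg.2 (hΦ y'))

lemma le_PFN_Astar (hP : ∀ a, 0 < P a) (hΦ : Φ ≤ 1) (hxy : dSeq d x y ≤ n * Δ) (hκ : 0 ≤ κ)
    (hκΦ : ∀ y' ∈ typeClass y, κ ≤ 1 - Φ y') :
    κ * (((n : ℝ) + 1) ^ (Fintype.card (A × A) + Fintype.card A))⁻¹ *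
      Real.exp (-(n * klDiv (empP x) P)) ≤ PFN P Φ (Astar (dSeq d) Δ) := by
  have hseq : ∀ z : Fin n → A, 0 ≤ seqProb P z := seqProb_nonneg fun a => (hP a).le
  have hinner : ∀ z ∈ typeClass x, κ * (((n : ℝ) + 1) ^ Fintype.card (A × A))⁻¹ ≤
      ∑ y', Astar (dSeq d) Δ z y' * (1 - Φ y') := fun z hz => by
    obtain ⟨σ, rfl⟩ := exists_perm_of_letterCount_eq (mem_typeClass.1 hz)
    refine le_sum_Astar_mul_one_sub (y := y ∘ σ) hΦ ((dSeq_comp_perm d x y σ).trans_le hxy) hκ ?_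
    simpa only [mem_typeClass, letterCount_comp_perm] using hκΦ
  have hclass : (((n : ℝ) + 1) ^ Fintype.card A)⁻¹ * Real.exp (-(n * klDiv (empP x) P)) ≤
      ∑ z ∈ typeClass x, seqProb P z := by
    rw [sum_typeClass_seqProb, inv_mul_le_iff₀ (by positivity)]
    exact exp_neg_mul_klDiv_le hP x
  calc κ * (((n : ℝ) + 1) ^ (Fintype.card (A × A) + Fintype.card A))⁻¹ *
        Real.exp (-(n * klDiv (empP x) P))
      = (((n : ℝ) + 1) ^ Fintype.card A)⁻¹ * Real.exp (-(n * klDiv (empP x) P)) *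
          (κ * (((n : ℝ) + 1) ^ Fintype.card (A × A))⁻¹) := by
        rw [pow_add, mul_inv]
        ring
    _ ≤ (∑ z ∈ typeClass x, seqProb P z) * (κ * (((n : ℝ) + 1) ^ Fintype.card (A × A))⁻¹) := by
        gcongr
    _ ≤ ∑ z ∈ typeClass x, seqProb P z * ∑ y', Astar (dSeq d) Δ z y' * (1 - Φ y') := by
        rw [Finset.sum_mul]
        exact Finset.sum_le_sum fun z hz => mul_le_mul_of_nonneg_left (hinner z hz) (hseq z)
    _ ≤ PFN P Φ (Astar (dSeq d) Δ) := by
        rw [PFN_eq_sum_mul_sum]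
        exact Finset.sum_le_univ_sum_of_nonneg fun z => mul_nonneg (hseq z) <|
          Finset.sum_nonneg fun y' _ => mul_nonneg (Astar_nonneg _ _ _ _) (sub_nonneg.2 (hΦ y'))

end FalseNegatives

section NeymanPearsonRule

variable {A : Type} [Fintype A] [DecidableEq A] {n : ℕ} {d : A → A → ℝ} {P : A → ℝ}
  {Δ lam : ℝ} {x y : Fin n → A}

lemma DtildeN_le (P : A → ℝ) (hxy : dSeq d x y ≤ n * Δ) :
    DtildeN d Δ y P ≤ klDiv (empP x) P := by
  refine csInf_le ((Set.finite_range fun x : Fin n → A => klDiv (empP x) P).subset ?_).bddBelow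
    ⟨x, hxy, rfl⟩
  rintro _ ⟨x', -, rfl⟩
  exact Set.mem_range_self x'

lemma DtildeN_le_of_mem_typeClass (P : A → ℝ) (hxy : dSeq d x y ≤ n * Δ) {y' : Fin n → A}
    (hy' : y' ∈ typeClass y) : DtildeN d Δ y' P ≤ klDiv (empP x) P := by
  obtain ⟨σ, rfl⟩ := exists_perm_of_letterCount_eq (mem_typeClass.1 hy')
  rw [← empP_congr (letterCount_comp_perm x σ)]
  exact DtildeN_le P ((dSeq_comp_perm d x y σ).trans_le hxy)

lemma Dtilde_empP_le_DtildeN (hd : ∀ a, d a a = 0) (hΔ : 0 ≤ Δ) (hP : ∀ a, 0 < P a)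
    (hn : 0 < n) (y : Fin n → A) : Dtilde d Δ (empP y) P ≤ DtildeN d Δ y P := by
  have hyy : dSeq d y y ≤ n * Δ := by
    rw [dSeq_self hd]
    positivity
  refine le_csInf ⟨_, y, hyy, rfl⟩ ?_
  rintro _ ⟨x, hxy, rfl⟩
  exact Dtilde_empP_le hP hn hxy

/-- The Neyman–Pearson rule `Φ*_n` against a `P`-source whose outputs may have been distorted by
at most `Δ` per letter. -/
def npRule (d : A → A → ℝ) (P : A → ℝ) (Δ lam : ℝ) (y : Fin n → A) : ℝ :=
  Real.exp (-(n : ℝ) * max (lam - DtildeN d Δ y P) 0)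

lemma npRule_nonneg (d : A → A → ℝ) (P : A → ℝ) (Δ lam : ℝ) :
    0 ≤ (npRule d P Δ lam : (Fin n → A) → ℝ) :=
  fun _ => Real.exp_nonneg _

lemma npRule_le_one (d : A → A → ℝ) (P : A → ℝ) (Δ lam : ℝ) :
    (npRule d P Δ lam : (Fin n → A) → ℝ) ≤ 1 := fun _ =>
  Real.exp_le_one_iff.2 <|
    mul_nonpos_of_nonpos_of_nonneg (neg_nonpos.2 n.cast_nonneg) (le_max_right _ _)

lemma DtildeN_lt_of_npRule_lt_one (h : npRule d P Δ lam y < 1) : DtildeN d Δ y P < lam := by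
  contrapose! h
  rw [npRule, max_eq_right (sub_nonpos.2 h), mul_zero, Real.exp_zero]

lemma npRule_le_half (h : 1 ≤ n * (lam - DtildeN d Δ y P)) : npRule d P Δ lam y ≤ 1 / 2 := by
  have hmax : 1 ≤ n * max (lam - DtildeN d Δ y P) 0 :=
    h.trans (mul_le_mul_of_nonneg_left (le_max_left _ _) n.cast_nonneg)
  calc npRule d P Δ lam y ≤ Real.exp (-1) := Real.exp_le_exp.2 (by linarith)
    _ ≤ 1 / 2 := Real.exp_neg_one_lt_half.le

variable {d₀ d₁ : A → A → ℝ} {P₀ P₁ : A → ℝ} {Δ₀ Δ₁ : ℝ}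

lemma PFN_npRule_le (hd₀ : ∀ a, d₀ a a = 0) (hd₁ : ∀ a, d₁ a a = 0) (hP₀ : ∀ a, 0 < P₀ a)
    (hP₁ : ∀ a, 0 < P₁ a) (hΔ₀ : 0 ≤ Δ₀) (hΔ₁ : 0 ≤ Δ₁) (hn : 0 < n) :
    PFN P₁ (npRule d₀ P₀ Δ₀ lam : (Fin n → A) → ℝ) (Astar (dSeq d₁) Δ₁) ≤
      ((n : ℝ) + 1) ^ Fintype.card A *
        Real.exp (-(n * npExponent d₀ d₁ P₀ P₁ Δ₀ Δ₁ lam)) := by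
  refine PFN_le hP₁ (InC_Astar hd₁ hΔ₁ n) (npRule_nonneg d₀ P₀ Δ₀ lam) fun x y hxy hy => ?_
  have hlam : Dtilde d₀ Δ₀ (empP y) P₀ ≤ lam :=
    (Dtilde_empP_le_DtildeN hd₀ hΔ₀ hP₀ hn y).trans (DtildeN_lt_of_npRule_lt_one hy).le
  exact (npExponent_le hd₁ hP₁ hΔ₁ (isPMF_empP hn y) hlam).trans (Dtilde_empP_le hP₁ hn hxy)

lemma le_PFN_npRule (hP₁ : ∀ a, 0 < P₁ a) {x₀ y₀ x₁ y₁ : Fin n → A}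
    (hy : letterCount y₁ = letterCount y₀) (h₀ : dSeq d₀ x₀ y₀ ≤ n * Δ₀)
    (h₁ : dSeq d₁ x₁ y₁ ≤ n * Δ₁) (hgap : 1 ≤ n * (lam - klDiv (empP x₀) P₀)) :
    1 / 2 * (((n : ℝ) + 1) ^ (Fintype.card (A × A) + Fintype.card A))⁻¹ *
        Real.exp (-(n * klDiv (empP x₁) P₁)) ≤
      PFN P₁ (npRule d₀ P₀ Δ₀ lam : (Fin n → A) → ℝ) (Astar (dSeq d₁) Δ₁) := by
  refine le_PFN_Astar hP₁ (npRule_le_one d₀ P₀ Δ₀ lam) h₁ one_half_pos.le fun y' hy' => ?_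
  have hD : DtildeN d₀ Δ₀ y' P₀ ≤ klDiv (empP x₀) P₀ :=
    DtildeN_le_of_mem_typeClass P₀ h₀ (mem_typeClass.2 ((mem_typeClass.1 hy').trans hy))
  have hhalf : npRule d₀ P₀ Δ₀ lam y' ≤ 1 / 2 :=
    npRule_le_half (hgap.trans (mul_le_mul_of_nonneg_left (sub_le_sub_left hD lam) n.cast_nonneg))
  linarith

end NeymanPearsonRule

section Rounding

lemma exists_nat_seq_tendsto_mul_le {q : ℝ} (hq : 0 ≤ q) (s : ℝ) :
    ∃ r : ℕ → ℕ, Tendsto (fun n => (r n : ℝ) / n) atTop (nhds q) ∧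
      ∀ n, (r n : ℝ) * s ≤ n * (q * s) := by
  rcases le_total 0 s with hs | hs
  · refine ⟨fun n => ⌊q * n⌋₊,
      (tendsto_nat_floor_mul_div_atTop hq).comp tendsto_natCast_atTop_atTop, fun n => ?_⟩
    rw [← mul_assoc, mul_comm (n : ℝ)]
    exact mul_le_mul_of_nonneg_right (Nat.floor_le (by positivity)) hs
  · refine ⟨fun n => ⌈q * n⌉₊,
      (tendsto_nat_ceil_mul_div_atTop hq).comp tendsto_natCast_atTop_atTop, fun n => ?_⟩
    rw [← mul_assoc, mul_comm (n : ℝ)]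
    exact mul_le_mul_of_nonpos_right (Nat.le_ceil _) hs

/- All letters but the free one `b₀` are rounded in the direction that lowers the cost; `b₀`
absorbs the remainder. -/
lemma exists_rounded_counts {B : Type*} [Fintype B] {w s : B → ℝ} (hw : 0 ≤ w) {b₀ : B}
    (hb₀ : 0 < w b₀) (hs : s b₀ = 0) {M : ℕ → ℕ}
    (hM : Tendsto (fun n => (M n : ℝ) / n) atTop (nhds (∑ b, w b))) :
    ∃ K : ℕ → B → ℕ, (∀ b, Tendsto (fun n => (K n b : ℝ) / n) atTop (nhds (w b))) ∧
      ∀ᶠ n in atTop, ∑ b, K n b = M n ∧ ∑ b, (K n b : ℝ) * s b ≤ n * ∑ b, w b * s b := by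
  choose r hr hrs using fun b => exists_nat_seq_tendsto_mul_le (hw b) (s b)
  let R : ℕ → ℕ := fun n => ∑ b ∈ univ.erase b₀, r b n
  have hR : Tendsto (fun n => (R n : ℝ) / n) atTop (nhds (∑ b ∈ univ.erase b₀, w b)) := by
    simpa only [R, Nat.cast_sum, Finset.sum_div] using tendsto_finsetSum _ fun b _ => hr b
  have hwsum : ∑ b ∈ univ.erase b₀, w b + w b₀ = ∑ b, w b :=
    Finset.sum_erase_add _ _ (Finset.mem_univ b₀)
  have hRM : ∀ᶠ n in atTop, R n ≤ M n := by
    filter_upwards [hR.eventually_lt hM (by linarith), eventually_gt_atTop 0] with n hlt hn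
    rw [div_lt_div_iff_of_pos_right (Nat.cast_pos.2 hn)] at hlt
    exact_mod_cast hlt.le
  let K : ℕ → B → ℕ := fun n => Function.update (r · n) b₀ (M n - R n)
  have hKself : ∀ n, K n b₀ = M n - R n := fun n => Function.update_self _ _ _
  have hKne : ∀ n, ∀ b ≠ b₀, K n b = r b n := fun n b hb => Function.update_of_ne hb _ _
  refine ⟨K, fun b => ?_, hRM.mono fun n hn => ⟨?_, ?_⟩⟩
  · by_cases hb : b = b₀
    · subst hb
      rw [← eq_sub_iff_add_eq'] at hwsum
      rw [hwsum]
      refine (hM.sub hR).congr' (hRM.mono fun n hn => ?_)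
      simp only [hKself, Nat.cast_sub hn, sub_div]
    · simpa only [hKne _ b hb] using hr b
  · rw [← Finset.sum_erase_add _ _ (Finset.mem_univ b₀), hKself,
      Finset.sum_congr rfl fun b hb => hKne n b (Finset.ne_of_mem_erase hb)]
    exact Nat.add_sub_cancel' hn
  · rw [Finset.mul_sum]
    refine Finset.sum_le_sum fun b _ => ?_
    by_cases hb : b = b₀
    · simp [hb, hs]
    · rw [hKne n b hb]
      exact hrs b n

variable {A : Type} [Fintype A] {d : A → A → ℝ} {Δ c : ℝ} {P PY : A → ℝ}
  {Q : A × A → ℝ} {N : ℕ → A → ℕ}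

lemma IsPMF.exists_counts (hPY : IsPMF PY) :
    ∃ N : ℕ → A → ℕ, (∀ b, Tendsto (fun n => (N n b : ℝ) / n) atTop (nhds (PY b))) ∧
      ∀ᶠ n in atTop, ∑ b, N n b = n := by
  obtain ⟨b₀, -, hb₀⟩ : ∃ b ∈ univ, 0 < PY b :=
    Finset.exists_lt_of_sum_lt (by simp [hPY.2])
  have hM : Tendsto (fun n : ℕ => ((n : ℕ) : ℝ) / n) atTop (nhds (∑ b, PY b)) := by
    rw [hPY.2]
    refine tendsto_const_nhds.congr' ((eventually_gt_atTop 0).mono fun n hn => ?_)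
    exact (div_self (Nat.cast_ne_zero.2 hn.ne')).symm
  obtain ⟨N, hN, hNsum⟩ := exists_rounded_counts (s := 0) hPY.1 hb₀ rfl hM
  exact ⟨N, hN, hNsum.mono fun n h => h.1⟩

lemma IsAdmissible.exists_joint_counts (hQ : IsAdmissible d Δ PY Q) (hd : ∀ a, d a a = 0)
    (hdiag : ∀ b, 0 < Q (b, b))
    (hN : ∀ b, Tendsto (fun n => (N n b : ℝ) / n) atTop (nhds (PY b))) :
    ∃ J : ℕ → A × A → ℕ, (∀ q, Tendsto (fun n => (J n q : ℝ) / n) atTop (nhds (Q q))) ∧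
      ∀ᶠ n in atTop, (∀ b, ∑ a, J n (a, b) = N n b) ∧
        ∑ q : A × A, (J n q : ℝ) * d q.1 q.2 ≤ n * Δ := by
  have hcol : ∀ b, ∑ a, Q (a, b) = PY b := congrFun hQ.margY_eq
  choose K hK hKev using fun b => exists_rounded_counts
    (w := fun a => Q (a, b)) (s := fun a => d a b)
    (M := fun n => N n b) (fun a => hQ.isPMF.1 (a, b)) (hdiag b) (hd b) (by rw [hcol]; exact hN b)
  refine ⟨fun n q => K q.2 n q.1, fun q => hK q.2 q.1, ?_⟩
  filter_upwards [eventually_all.2 hKev] with n hn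
  refine ⟨fun b => (hn b).1, ?_⟩
  calc ∑ q : A × A, (K q.2 n q.1 : ℝ) * d q.1 q.2
      = ∑ b, ∑ a, (K b n a : ℝ) * d a b := Fintype.sum_prod_type_right _
    _ ≤ ∑ b, n * ∑ a, Q (a, b) * d a b := Finset.sum_le_sum fun b _ => (hn b).2
    _ = n * expDist d Q := by rw [← Finset.mul_sum, expDist_eq_sum_sum]
    _ ≤ n * Δ := mul_le_mul_of_nonneg_left hQ.expDist_le n.cast_nonneg

lemma tendsto_klDiv_margX (hP : ∀ a, 0 < P a) {J : ℕ → A × A → ℕ}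
    (hJ : ∀ q, Tendsto (fun n => (J n q : ℝ) / n) atTop (nhds (Q q))) :
    Tendsto (fun n : ℕ => klDiv (margX fun q => (J n q : ℝ) / n) P) atTop
      (nhds (klDiv (margX Q) P)) := by
  have hmarg : Tendsto (fun n : ℕ => margX fun q => (J n q : ℝ) / n) atTop (nhds (margX Q)) :=
    tendsto_pi_nhds.2 fun a => tendsto_finsetSum _ fun b _ => hJ (a, b)
  have hnonneg : ∀ n : ℕ, (margX fun q => (J n q : ℝ) / n) ∈ Set.Ici 0 := fun n a =>
    Finset.sum_nonneg fun b _ => by positivity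
  have hlim : margX Q ∈ Set.Ici 0 :=
    isClosed_Ici.mem_of_tendsto hmarg (Eventually.of_forall hnonneg)
  exact (continuousOn_klDiv hP _ hlim).tendsto.comp
    (tendsto_nhdsWithin_iff.2 ⟨hmarg, Eventually.of_forall hnonneg⟩)

lemma IsAdmissible.eventually_exists_seq [DecidableEq A] (hQ : IsAdmissible d Δ PY Q)
    (hd : ∀ a, d a a = 0) (hdiag : ∀ b, 0 < Q (b, b)) (hP : ∀ a, 0 < P a)
    (hc : klDiv (margX Q) P < c)
    (hN : ∀ b, Tendsto (fun n => (N n b : ℝ) / n) atTop (nhds (PY b)))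
    (hNsum : ∀ᶠ n in atTop, ∑ b, N n b = n) :
    ∀ᶠ n in atTop, ∃ x y : Fin n → A,
      letterCount y = N n ∧ dSeq d x y ≤ n * Δ ∧ klDiv (empP x) P < c := by
  obtain ⟨J, hJ, hJev⟩ := hQ.exists_joint_counts hd hdiag hN
  filter_upwards [hJev, hNsum, (tendsto_klDiv_margX hP hJ).eventually_lt_const hc]
    with n ⟨hJcol, hJd⟩ hn hJkl
  have hJsum : ∑ q, J n q = n := by
    rw [Fintype.sum_prod_type_right]
    exact (Finset.sum_congr rfl fun b _ => hJcol b).trans hn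
  obtain ⟨z, hz⟩ := exists_letterCount_eq hJsum
  refine ⟨fun i => (z i).1, fun i => (z i).2, ?_, ?_, ?_⟩
  · ext b
    rw [letterCount_snd, hz, hJcol]
  · rwa [dSeq_eq_sum_letterCount_mul, hz]
  · have hempP : empP z = fun q => (J n q : ℝ) / n := by
      ext q
      rw [empP_eq_div, hz]
    rwa [← margX_empP, hempP]

end Rounding

section Exponents

lemma tendsto_log_add_one_div_atTop :
    Tendsto (fun n : ℕ => Real.log (n + 1) / n) atTop (nhds 0) := by
  have h := (Real.tendsto_pow_log_div_mul_add_atTop 1 (-1) 1 one_ne_zero).comp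
    (tendsto_atTop_add_const_right atTop 1 tendsto_natCast_atTop_atTop)
  exact h.congr fun n => by simp

variable {p : ℕ → ℝ} {E a c κ : ℝ} {j k : ℕ}

lemma eventually_lt_neg_log_div (haE : a < E) (hpos : ∀ᶠ n in atTop, 0 < p n)
    (hupper : ∀ᶠ n : ℕ in atTop, p n ≤ ((n : ℝ) + 1) ^ j * Real.exp (-(n * E))) :
    ∀ᶠ n : ℕ in atTop, a < -(1 / (n : ℝ)) * Real.log (p n) := by
  have hlim : Tendsto (fun n : ℕ => E - j * (Real.log (n + 1) / n)) atTop (nhds E) := by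
    simpa only [mul_zero, sub_zero] using
      tendsto_const_nhds.sub (tendsto_log_add_one_div_atTop.const_mul (j : ℝ))
  filter_upwards [hpos, hupper, eventually_gt_atTop 0, hlim.eventually_const_lt haE]
    with n hpn hle hn hlt
  have hlog : Real.log (p n) ≤ j * Real.log (n + 1) - n * E := by
    refine (Real.log_le_log hpn hle).trans_eq ?_
    rw [Real.log_mul (by positivity) (Real.exp_pos _).ne', Real.log_pow, Real.log_exp,
      sub_eq_add_neg]
  calc a < E - j * (Real.log (n + 1) / n) := hlt
    _ = -(1 / (n : ℝ)) * (j * Real.log (n + 1) - n * E) := by field_simp; ring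
    _ ≤ -(1 / (n : ℝ)) * Real.log (p n) :=
      mul_le_mul_of_nonpos_left hlog (neg_nonpos.2 (by positivity))

lemma eventually_neg_log_div_lt (hEc : E < c) (hκ : 0 < κ)
    (hlower : ∀ᶠ n : ℕ in atTop, κ * (((n : ℝ) + 1) ^ k)⁻¹ * Real.exp (-(n * E)) ≤ p n) :
    ∀ᶠ n : ℕ in atTop, -(1 / (n : ℝ)) * Real.log (p n) < c := by
  have hlim : Tendsto (fun n : ℕ => E + k * (Real.log (n + 1) / n) - Real.log κ / n) atTop
      (nhds E) := by
    simpa only [mul_zero, add_zero, sub_zero] using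
      (tendsto_const_nhds.add (tendsto_log_add_one_div_atTop.const_mul (k : ℝ))).sub
        (tendsto_const_div_atTop_nhds_zero_nat (Real.log κ))
  filter_upwards [hlower, eventually_gt_atTop 0, hlim.eventually_lt_const hEc] with n hge hn hlt
  have hlog : Real.log κ - k * Real.log (n + 1) - n * E ≤ Real.log (p n) := by
    refine Eq.trans_le ?_ (Real.log_le_log (by positivity) hge)
    rw [Real.log_mul (by positivity) (Real.exp_pos _).ne', Real.log_mul hκ.ne' (by positivity),
      Real.log_inv, Real.log_pow, Real.log_exp]
    ring
  calc -(1 / (n : ℝ)) * Real.log (p n)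
      ≤ -(1 / (n : ℝ)) * (Real.log κ - k * Real.log (n + 1) - n * E) :=
        mul_le_mul_of_nonpos_left hlog (neg_nonpos.2 (by positivity))
    _ = E + k * (Real.log (n + 1) / n) - Real.log κ / n := by field_simp; ring
    _ < c := hlt

end Exponents

section Exponent

variable {A : Type} [Fintype A] [DecidableEq A] {d₀ d₁ : A → A → ℝ} {P₀ P₁ : A → ℝ}
  {Δ₀ Δ₁ lam c : ℝ}

lemma eventually_le_PFN_npRule (hd₀ : ∀ a, d₀ a a = 0) (hd₁ : ∀ a, d₁ a a = 0)
    (hP₀ : IsPMF P₀) (hP₀pos : ∀ a, 0 < P₀ a) (hP₁pos : ∀ a, 0 < P₁ a) (hΔ₀ : 0 ≤ Δ₀)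
    (hΔ₁ : 0 ≤ Δ₁) (hlam : 0 < lam) (hc : npExponent d₀ d₁ P₀ P₁ Δ₀ Δ₁ lam < c) :
    ∀ᶠ n : ℕ in atTop,
      1 / 2 * (((n : ℝ) + 1) ^ (Fintype.card (A × A) + Fintype.card A))⁻¹ *
          Real.exp (-(n * c)) ≤
        PFN P₁ (npRule d₀ P₀ Δ₀ lam : (Fin n → A) → ℝ) (Astar (dSeq d₁) Δ₁) := by
  obtain ⟨PY, Q₀, Q₁, hQ₀, hQ₁, hdiag₀, hdiag₁, hkl₀, hkl₁⟩ :=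
    exists_admissible_pair_of_npExponent_lt hd₀ hd₁ hP₀ hP₀pos hP₁pos hΔ₀ hΔ₁ hlam hc
  obtain ⟨l, hl, hllam⟩ := exists_between hkl₀
  obtain ⟨N, hN, hNsum⟩ := (hQ₀.margY_eq ▸ hQ₀.isPMF.margY : IsPMF PY).exists_counts
  have hgap : ∀ᶠ n : ℕ in atTop, 1 ≤ (n : ℝ) * (lam - l) :=
    (tendsto_natCast_atTop_atTop.atTop_mul_const (sub_pos.2 hllam)).eventually_ge_atTop 1
  filter_upwards [hQ₀.eventually_exists_seq hd₀ hdiag₀ hP₀pos hl hN hNsum,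
    hQ₁.eventually_exists_seq hd₁ hdiag₁ hP₁pos hkl₁ hN hNsum, hgap]
    with n ⟨x₀, y₀, hy₀, hxy₀, hx₀⟩ ⟨x₁, y₁, hy₁, hxy₁, hx₁⟩ hn
  refine le_trans ?_ (le_PFN_npRule hP₁pos (hy₁.trans hy₀.symm) hxy₀ hxy₁ <|
    hn.trans (mul_le_mul_of_nonneg_left (sub_le_sub_left hx₀.le lam) n.cast_nonneg))
  gcongr

end Exponent

theorem np_fn_exponent_general
    {A : Type} [Fintype A] [DecidableEq A] {d₀ d₁ : A → A → ℝ}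
    (hd₀ : ∀ a, d₀ a a = 0) (hd₁ : ∀ a, d₁ a a = 0) {P₀ P₁ : A → ℝ} (hP₀ : IsPMF P₀)
    (hP₀pos : ∀ a, 0 < P₀ a) (hP₁pos : ∀ a, 0 < P₁ a) {Δ₀ Δ₁ lam : ℝ} (hΔ₀ : 0 ≤ Δ₀)
    (hΔ₁ : 0 ≤ Δ₁) (hlam : 0 < lam) :
    (∀ᶠ n : ℕ in atTop,
      0 < PFN P₁ (npRule d₀ P₀ Δ₀ lam : (Fin n → A) → ℝ) (Astar (dSeq d₁) Δ₁)) ∧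
    Tendsto
      (fun n : ℕ => -(1 / (n : ℝ)) * Real.log
        (PFN P₁ (npRule d₀ P₀ Δ₀ lam : (Fin n → A) → ℝ) (Astar (dSeq d₁) Δ₁)))
      atTop (nhds (npExponent d₀ d₁ P₀ P₁ Δ₀ Δ₁ lam)) := by
  have hlower := fun c => eventually_le_PFN_npRule (c := c) hd₀ hd₁ hP₀ hP₀pos hP₁pos hΔ₀ hΔ₁ hlam
  have hpos : ∀ᶠ n : ℕ in atTop,
      0 < PFN P₁ (npRule d₀ P₀ Δ₀ lam : (Fin n → A) → ℝ) (Astar (dSeq d₁) Δ₁) :=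
    (hlower _ (lt_add_one _)).mono fun n hn => lt_of_lt_of_le (by positivity) hn
  refine ⟨hpos, tendsto_order.2 ⟨fun a ha => ?_, fun c hc => ?_⟩⟩
  · exact eventually_lt_neg_log_div ha hpos <| (eventually_gt_atTop 0).mono fun n hn =>
      PFN_npRule_le hd₀ hd₁ hP₀pos hP₁pos hΔ₀ hΔ₁ hn
  · obtain ⟨c', hc', hc'c⟩ := exists_between hc
    exact eventually_neg_log_div_lt hc'c one_half_pos (hlower c' hc')

/-- Theorem 3: false-negative exponent of the Neyman–Pearson game at
equilibrium. -/
theorem np_fn_exponent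
    {A : Type} [Fintype A] [DecidableEq A] [Nonempty A]
    (d : A → A → ℝ) (hd : ∀ a b, 0 ≤ d a b) (hdrefl : ∀ a, d a a = 0)
    (P0 P1 : A → ℝ) (hP0 : IsPMF P0) (hP1 : IsPMF P1)
    (hP0pos : ∀ a, 0 < P0 a) (hP1pos : ∀ a, 0 < P1 a)
    (Δ0 Δ1 lam : ℝ) (hΔ0 : 0 ≤ Δ0) (hΔ1 : 0 ≤ Δ1) (hlam : 0 < lam) :
    (∀ᶠ n : ℕ in atTop,
      0 < PFN P1
            (fun y : Fin n → A =>
              Real.exp (-(n : ℝ) * max (lam - DtildeN d Δ0 y P0) 0))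
            (Astar (dSeq d) Δ1)) ∧
    Tendsto
      (fun n : ℕ =>
        -(1 / (n : ℝ)) * Real.log
          (PFN P1
            (fun y : Fin n → A =>
              Real.exp (-(n : ℝ) * max (lam - DtildeN d Δ0 y P0) 0))
            (Astar (dSeq d) Δ1)))
      atTop
      (nhds (sInf {v | ∃ PY : A → ℝ,
        IsPMF PY ∧ Dtilde d Δ0 PY P0 ≤ lam ∧ v = Dtilde d Δ1 PY P1})) :=
  np_fn_exponent_general hdrefl hdrefl hP0 hP0pos hP1pos hΔ0 hΔ1 hlam
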